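/- arXiv:2204.03707 — 3 statements merged into one kernel-verified Lean document; each statement's English description precedes it below -/
import Mathlib

section
/- For every feasible solution (z, y, x, x̄, P) of the formulation (HLPLF-1BP) there exists a feasible solution (z, y, x', x̄', P') with the same design variables z and y, whose objective value is less than or equal to that of (z, y, x, x̄, P), and which satisfies x'^r_{lk} = x̄'^r_{lk} = P'^r_{lk} = 0 for every commodity r ∈ R and every arc (l,k) ∈ A such that C^r_{kl} < C^r_{lk}. In particular, if the feasible region is nonempty and an optimal solution exists, there is an optimal solution with this property. -/
open Finset

instance sym2Nonempty {V : Type*} [Nonempty V] : Nonempty (Sym2 V) :=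
  ⟨s(Classical.arbitrary V, Classical.arbitrary V)⟩

/-- Feasibility of a solution `(z, y, x, xb, P)` for the formulation (HLPLF-1BP). -/
def FeasibleHLPLF1BP {V R : Type*} [Fintype V] [DecidableEq V] [Nonempty V] [Fintype R]
    (p : Sym2 V → ℝ)
    (z : V → ℝ) (y : Sym2 V → ℝ)
    (x xb : R → V × V → ℝ) (P : R → V × V → ℝ) : Prop :=
  -- binary variables
  (∀ k : V, z k = 0 ∨ z k = 1) ∧
  (∀ e : Sym2 V, y e = 0 ∨ y e = 1) ∧
  (∀ (r : R) (a : V × V), x r a = 0 ∨ x r a = 1) ∧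
  (∀ (r : R) (a : V × V), xb r a = 0 ∨ xb r a = 1) ∧
  -- exactly one inter-hub arc in the original and the backup path
  (∀ r : R, ∑ a : V × V, x r a = 1) ∧
  (∀ r : R, ∑ a : V × V, xb r a = 1) ∧
  -- original and backup path use different, activated, inter-hub edges
  (∀ (r : R) (k l : V), k ≠ l →
      x r (k, l) + x r (l, k) + xb r (k, l) + xb r (l, k) ≤ y s(k, l)) ∧
  (∀ (r : R) (k : V), x r (k, k) + xb r (k, k) ≤ y s(k, k)) ∧
  -- endpoints of activated edges are activated hubs
  (∀ k l : V, y s(k, l) ≤ z k ∧ y s(k, l) ≤ z l) ∧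
  -- valid inequalities linking routing and hub activation variables
  (∀ (r : R) (k : V),
      x r (k, k) + ∑ l ∈ univ.filter (· ≠ k), (x r (k, l) + x r (l, k)) ≤ z k) ∧
  (∀ (r : R) (k : V),
      xb r (k, k) + ∑ l ∈ univ.filter (· ≠ k), (xb r (k, l) + xb r (l, k)) ≤ z k) ∧
  -- linearization constraints for the P variables
  (∀ (r : R) (a : V × V),
      (∑ a' : V × V, p s(a'.1, a'.2) * x r a') + (xb r a - 1) ≤ P r a) ∧
  (∀ (r : R) (a : V × V), 0 ≤ P r a) ∧
  -- valid inequality bounding the P variables by the maximum failure probability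
  (∀ r : R, ∑ a : V × V, P r a ≤ Finset.univ.sup' Finset.univ_nonempty p)

/-- Objective value of a solution of (HLPLF-1BP). -/
def objHLPLF1BP {V R : Type*} [Fintype V] [DecidableEq V] [Fintype R]
    (f : V → ℝ) (h : Sym2 V → ℝ) (C : R → V × V → ℝ) (p : Sym2 V → ℝ)
    (z : V → ℝ) (y : Sym2 V → ℝ)
    (x : R → V × V → ℝ) (P : R → V × V → ℝ) : ℝ :=
  ∑ k : V, f k * z k + ∑ e : Sym2 V, h e * y e +
    ∑ r : R, ∑ a : V × V, C r a * ((1 - p s(a.1, a.2)) * x r a + P r a)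

/-!
Send every arc to its cheaper orientation and push `x`, `xb` and `P` forward along this map, summing
over fibers. The map only changes the direction of an arc, so the constraints indexed by edges or by
hubs are unaffected, and each unit of flow is charged a cost that is no larger than before. The
pushforward of a single backup arc is again a single arc. The value of `P` there can only grow, and
on every other arc the linearization constraint only asks that the failure probability be at most
`1`.
-/

section FiberSum

variable {ι κ M : Type*} [Fintype ι] [DecidableEq κ]

/-- The pushforward of the function `g` along `φ`: its value at `j` is the sum of `g` over the fiber
of `φ` above `j`. -/
def fiberSum [AddCommMonoid M] (φ : ι → κ) (g : ι → M) (j : κ) : M :=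
  ∑ i with φ i = j, g i

theorem fiberSum_of_forall_ne [AddCommMonoid M] {φ : ι → κ} (g : ι → M) {j : κ}
    (hj : ∀ i, φ i ≠ j) : fiberSum φ g j = 0 := by
  simp [fiberSum, hj]

theorem fiberSum_single [DecidableEq ι] [AddCommMonoid M] (φ : ι → κ) (i : ι) (m : M) :
    fiberSum φ (Pi.single i m) = Pi.single (φ i) m := by
  ext j
  simp [fiberSum, Pi.single_apply, eq_comm]

theorem sum_fiberSum_of_mem_iff [AddCommMonoid M] {φ : ι → ι} [DecidableEq ι] (g : ι → M)
    {s : Finset ι} (hs : ∀ i, φ i ∈ s ↔ i ∈ s) : ∑ i ∈ s, fiberSum φ g i = ∑ i ∈ s, g i := by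
  simp only [fiberSum, sum_fiberwise_eq_sum_filter, hs, filter_univ_mem]

theorem sum_mul_fiberSum [Fintype κ] [NonUnitalNonAssocSemiring M] (φ : ι → κ) (w : κ → M)
    (g : ι → M) : ∑ j, w j * fiberSum φ g j = ∑ i, w (φ i) * g i := by
  rw [← sum_fiberwise univ φ]
  refine sum_congr rfl fun j _ => ?_
  rw [fiberSum, mul_sum]
  exact sum_congr rfl fun i hi => by rw [(mem_filter.mp hi).2]

variable [AddCommMonoid M] [PartialOrder M] [IsOrderedAddMonoid M] {g : ι → M}

theorem fiberSum_nonneg (φ : ι → κ) (hg : ∀ i, 0 ≤ g i) (j : κ) : 0 ≤ fiberSum φ g j :=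
  sum_nonneg fun i _ => hg i

theorem le_fiberSum_apply (φ : ι → κ) (hg : ∀ i, 0 ≤ g i) (i : ι) : g i ≤ fiberSum φ g (φ i) :=
  single_le_sum (fun i _ => hg i) (by simp)

end FiberSum

theorem exists_eq_single_of_sum_eq_one {ι 𝕜 : Type*} [Fintype ι] [DecidableEq ι]
    [NonAssocSemiring 𝕜] [CharZero 𝕜] {g : ι → 𝕜} (hg : ∀ i, g i = 0 ∨ g i = 1)
    (hsum : ∑ i, g i = 1) : ∃ i, g = Pi.single i 1 := by
  classical
  have g_eq : ∀ i, g i = if g i = 1 then 1 else 0 := fun i => by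
    rcases hg i with hi | hi <;> simp [hi]
  have card_support : #{i | g i = 1} = 1 := by
    rw [sum_congr rfl fun i _ => g_eq i, sum_boole] at hsum
    exact_mod_cast hsum
  obtain ⟨i, hi⟩ := card_eq_one.mp card_support
  refine ⟨i, funext fun j => ?_⟩
  have hj : g j = 1 ↔ j = i := by simpa using Finset.ext_iff.mp hi j
  rw [g_eq j, Pi.single_apply, if_congr hj rfl rfl]

theorem fiberSum_eq_zero_or_one {ι κ 𝕜 : Type*} [Fintype ι] [DecidableEq κ]
    [NonAssocSemiring 𝕜] [CharZero 𝕜] (φ : ι → κ) {g : ι → 𝕜} (hg : ∀ i, g i = 0 ∨ g i = 1)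
    (hsum : ∑ i, g i = 1) (j : κ) : fiberSum φ g j = 0 ∨ fiberSum φ g j = 1 := by
  classical
  obtain ⟨i, rfl⟩ := exists_eq_single_of_sum_eq_one hg hsum
  rw [fiberSum_single, Pi.single_apply]
  exact (ite_eq_or_eq _ _ _).symm

theorem add_fiberSum_sub_one_le {ι κ 𝕜 : Type*} [Fintype ι] [DecidableEq κ]
    [NonAssocRing 𝕜] [PartialOrder 𝕜] [IsOrderedAddMonoid 𝕜] [CharZero 𝕜]
    (φ : ι → κ) {q : 𝕜} {g P : ι → 𝕜} (hq : q ≤ 1) (hg : ∀ i, g i = 0 ∨ g i = 1)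
    (hsum : ∑ i, g i = 1) (hP : ∀ i, 0 ≤ P i) (hlin : ∀ i, q + (g i - 1) ≤ P i) (j : κ) :
    q + (fiberSum φ g j - 1) ≤ fiberSum φ P j := by
  classical
  obtain ⟨i, rfl⟩ := exists_eq_single_of_sum_eq_one hg hsum
  rw [fiberSum_single]
  obtain rfl | hj := eq_or_ne j (φ i)
  · calc q + ((Pi.single (φ i) 1 : κ → 𝕜) (φ i) - 1)
        = q + ((Pi.single i 1 : ι → 𝕜) i - 1) := by rw [Pi.single_eq_same, Pi.single_eq_same]
      _ ≤ P i := hlin i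
      _ ≤ fiberSum φ P (φ i) := le_fiberSum_apply φ hP i
  · calc q + ((Pi.single (φ i) 1 : κ → 𝕜) j - 1)
        = q - 1 := by rw [Pi.single_eq_of_ne hj, zero_sub, ← sub_eq_add_neg]
      _ ≤ 0 := sub_nonpos.mpr hq
      _ ≤ fiberSum φ P j := fiberSum_nonneg φ hP j

section EdgePreserving

variable {V M : Type*} [Fintype V] [DecidableEq V] [AddCommMonoid M] {φ : V × V → V × V}

theorem fiberSum_diag (hφ : ∀ a, s((φ a).1, (φ a).2) = s(a.1, a.2)) (g : V × V → M) (k : V) :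
    fiberSum φ g (k, k) = g (k, k) := by
  have mem_diag : ∀ a : V × V, a ∈ ({(k, k)} : Finset (V × V)) ↔ s(a.1, a.2) = s(k, k) := by
    simp [Prod.ext_iff]
  have sum_eq := sum_fiberSum_of_mem_iff (φ := φ) (s := {(k, k)}) g fun a => by
    rw [mem_diag, mem_diag, hφ]
  rwa [sum_singleton, sum_singleton] at sum_eq

theorem fiberSum_add_fiberSum_swap (hφ : ∀ a, s((φ a).1, (φ a).2) = s(a.1, a.2))
    (g : V × V → M) (k l : V) :
    fiberSum φ g (k, l) + fiberSum φ g (l, k) = g (k, l) + g (l, k) := by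
  obtain rfl | hkl := eq_or_ne k l
  · rw [fiberSum_diag hφ]
  have mem_pair : ∀ a : V × V,
      a ∈ ({(k, l), (l, k)} : Finset (V × V)) ↔ s(a.1, a.2) = s(k, l) := by
    simp [Prod.ext_iff]
  have hne : (k, l) ≠ (l, k) := fun h => hkl (congrArg Prod.fst h)
  have sum_eq := sum_fiberSum_of_mem_iff (φ := φ) (s := {(k, l), (l, k)}) g fun a => by
    rw [mem_pair, mem_pair, hφ]
  rwa [sum_pair hne, sum_pair hne] at sum_eq

end EdgePreserving

section CheaperOrientation

variable {V β : Type*} [LinearOrder β]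

/-- The cheaper of the two orientations of the arc `a` for the cost function `c`; ties are resolved
by keeping `a`. -/
def cheaperOrientation (c : V × V → β) (a : V × V) : V × V :=
  if c a.swap < c a then a.swap else a

theorem sym2_cheaperOrientation (c : V × V → β) (a : V × V) :
    s((cheaperOrientation c a).1, (cheaperOrientation c a).2) = s(a.1, a.2) := by
  unfold cheaperOrientation
  split_ifs
  · exact Sym2.eq_swap
  · rfl

theorem cost_cheaperOrientation_le (c : V × V → β) (a : V × V) :
    c (cheaperOrientation c a) ≤ c a := by
  unfold cheaperOrientation
  split_ifs with h
  · exact h.le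
  · exact le_rfl

theorem cost_cheaperOrientation_le_swap (c : V × V → β) (a : V × V) :
    c (cheaperOrientation c a) ≤ c (cheaperOrientation c a).swap := by
  unfold cheaperOrientation
  split_ifs with h
  · exact h.le
  · exact not_lt.mp h

theorem fiberSum_cheaperOrientation_eq_zero {M : Type*} [Fintype V] [DecidableEq V]
    [AddCommMonoid M] {c : V × V → β} (g : V × V → M) {a : V × V} (ha : c a.swap < c a) :
    fiberSum (cheaperOrientation c) g a = 0 :=
  fiberSum_of_forall_ne g fun b hb =>
    ha.not_ge (hb ▸ cost_cheaperOrientation_le_swap c b)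

end CheaperOrientation

section HLPLF1BP

variable {V R : Type*} [Fintype V] [DecidableEq V] [Fintype R]
  {p : Sym2 V → ℝ} {z : V → ℝ} {y : Sym2 V → ℝ} {x xb P : R → V × V → ℝ}
  {φ : R → V × V → V × V}

theorem FeasibleHLPLF1BP.x_nonneg [Nonempty V] (hfeas : FeasibleHLPLF1BP p z y x xb P) (r : R)
    (a : V × V) : 0 ≤ x r a := by
  obtain ⟨-, -, hx, -⟩ := hfeas
  rcases hx r a with hxa | hxa <;> simp [hxa]

theorem FeasibleHLPLF1BP.P_nonneg [Nonempty V] (hfeas : FeasibleHLPLF1BP p z y x xb P) (r : R)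
    (a : V × V) : 0 ≤ P r a := by
  obtain ⟨-, -, -, -, -, -, -, -, -, -, -, -, hP, -⟩ := hfeas
  exact hP r a

theorem feasibleHLPLF1BP_fiberSum [Nonempty V] (hp1 : ∀ e, p e ≤ 1)
    (hφ : ∀ r a, s((φ r a).1, (φ r a).2) = s(a.1, a.2))
    (hfeas : FeasibleHLPLF1BP p z y x xb P) :
    FeasibleHLPLF1BP p z y (fun r => fiberSum (φ r) (x r)) (fun r => fiberSum (φ r) (xb r))
      (fun r => fiberSum (φ r) (P r)) := by
  have hx_nonneg := hfeas.x_nonneg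
  obtain ⟨hz, hy, hx, hxb, hx_sum, hxb_sum, hedge, hloop, hyz, hx_hub, hxb_hub, hlin, hP,
    hP_sum⟩ := hfeas
  have total (r : R) (g : V × V → ℝ) : ∑ a, fiberSum (φ r) g a = ∑ a, g a :=
    sum_fiberSum_of_mem_iff g (by simp)
  have failure_prob_eq (r : R) :
      ∑ a, p s(a.1, a.2) * fiberSum (φ r) (x r) a = ∑ a, p s(a.1, a.2) * x r a := by
    simp only [sum_mul_fiberSum (φ r) (fun a => p s(a.1, a.2)), hφ]
  have failure_prob_le_one (r : R) : ∑ a, p s(a.1, a.2) * x r a ≤ 1 := by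
    rw [← hx_sum r]
    exact sum_le_sum fun a _ => mul_le_of_le_one_left (hx_nonneg r a) (hp1 _)
  refine ⟨hz, hy, fun r => fiberSum_eq_zero_or_one _ (hx r) (hx_sum r),
    fun r => fiberSum_eq_zero_or_one _ (hxb r) (hxb_sum r), fun r => (total r _).trans (hx_sum r),
    fun r => (total r _).trans (hxb_sum r), fun r k l hkl => ?_, fun r k => ?_, hyz,
    fun r k => ?_, fun r k => ?_, fun r => ?_, fun r => fiberSum_nonneg _ (hP r),
    fun r => (total r _).trans_le (hP_sum r)⟩
  · simpa only [fiberSum_add_fiberSum_swap (hφ r), add_assoc] using hedge r k l hkl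
  · simpa only [fiberSum_diag (hφ r)] using hloop r k
  · simpa only [fiberSum_diag (hφ r), fiberSum_add_fiberSum_swap (hφ r)] using hx_hub r k
  · simpa only [fiberSum_diag (hφ r), fiberSum_add_fiberSum_swap (hφ r)] using hxb_hub r k
  · rw [failure_prob_eq]
    exact add_fiberSum_sub_one_le _ (failure_prob_le_one r) (hxb r) (hxb_sum r) (hP r) (hlin r)

theorem objHLPLF1BP_fiberSum_le {C : R → V × V → ℝ} (f : V → ℝ) (h : Sym2 V → ℝ)
    (z : V → ℝ) (y : Sym2 V → ℝ) (hp1 : ∀ e, p e ≤ 1) (hx : ∀ r a, 0 ≤ x r a)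
    (hP : ∀ r a, 0 ≤ P r a) (hφ : ∀ r a, s((φ r a).1, (φ r a).2) = s(a.1, a.2))
    (hCφ : ∀ r a, C r (φ r a) ≤ C r a) :
    objHLPLF1BP f h C p z y (fun r => fiberSum (φ r) (x r)) (fun r => fiberSum (φ r) (P r)) ≤
      objHLPLF1BP f h C p z y x P := by
  unfold objHLPLF1BP
  gcongr _ + ?_
  refine sum_le_sum fun r _ => ?_
  calc ∑ a, C r a * ((1 - p s(a.1, a.2)) * fiberSum (φ r) (x r) a + fiberSum (φ r) (P r) a)
      = ∑ a, C r (φ r a) * ((1 - p s(a.1, a.2)) * x r a + P r a) := by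
        simp only [mul_add, ← mul_assoc, sum_add_distrib, sum_mul_fiberSum (φ r) (C r),
          sum_mul_fiberSum (φ r) (fun a => C r a * (1 - p s(a.1, a.2))), hφ]
    _ ≤ ∑ a, C r a * ((1 - p s(a.1, a.2)) * x r a + P r a) :=
        sum_le_sum fun a _ => mul_le_mul_of_nonneg_right (hCφ r a) <|
          add_nonneg (mul_nonneg (sub_nonneg.mpr (hp1 _)) (hx r a)) (hP r a)

theorem hlplf1bp_halve_variables_general [Nonempty V]
    (f : V → ℝ) (h : Sym2 V → ℝ) (C : R → V × V → ℝ) (hp1 : ∀ e, p e ≤ 1)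
    (hfeas : FeasibleHLPLF1BP p z y x xb P) :
    ∃ (x' xb' : R → V × V → ℝ) (P' : R → V × V → ℝ),
      FeasibleHLPLF1BP p z y x' xb' P' ∧
      objHLPLF1BP f h C p z y x' P' ≤ objHLPLF1BP f h C p z y x P ∧
      ∀ (r : R) (k l : V), C r (k, l) < C r (l, k) →
        x' r (l, k) = 0 ∧ xb' r (l, k) = 0 ∧ P' r (l, k) = 0 := by
  have edge_eq (r : R) := sym2_cheaperOrientation (C r)
  refine ⟨_, _, _, feasibleHLPLF1BP_fiberSum hp1 edge_eq hfeas,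
    objHLPLF1BP_fiberSum_le f h z y hp1 hfeas.x_nonneg hfeas.P_nonneg edge_eq
      fun r => cost_cheaperOrientation_le (C r), fun r k l hlt => ?_⟩
  exact ⟨fiberSum_cheaperOrientation_eq_zero _ hlt, fiberSum_cheaperOrientation_eq_zero _ hlt,
    fiberSum_cheaperOrientation_eq_zero _ hlt⟩

end HLPLF1BP

/-- For every feasible solution of (HLPLF-1BP) there is a feasible solution with the same
design variables, no larger objective value, and with `x`, `xb` and `P` vanishing on every
arc `(l,k)` whose reversed arc is strictly cheaper (`C r (k,l) < C r (l,k)`).  In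
particular an optimal solution with this property exists whenever an optimal solution
exists. -/
theorem hlplf1bp_halve_variables
    {V R : Type*} [Fintype V] [DecidableEq V] [Nonempty V] [Fintype R]
    (f : V → ℝ) (h : Sym2 V → ℝ) (C : R → V × V → ℝ) (p : Sym2 V → ℝ)
    (hf : ∀ k : V, 0 ≤ f k) (hh : ∀ e : Sym2 V, 0 ≤ h e)
    (hC : ∀ (r : R) (a : V × V), 0 ≤ C r a)
    (hp0 : ∀ e : Sym2 V, 0 ≤ p e) (hp1 : ∀ e : Sym2 V, p e ≤ 1)
    (z : V → ℝ) (y : Sym2 V → ℝ)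
    (x xb : R → V × V → ℝ) (P : R → V × V → ℝ)
    (hfeas : FeasibleHLPLF1BP p z y x xb P) :
    ∃ (x' xb' : R → V × V → ℝ) (P' : R → V × V → ℝ),
      FeasibleHLPLF1BP p z y x' xb' P' ∧
      objHLPLF1BP f h C p z y x' P' ≤ objHLPLF1BP f h C p z y x P ∧
      ∀ (r : R) (k l : V), C r (k, l) < C r (l, k) →
        x' r (l, k) = 0 ∧ xb' r (l, k) = 0 ∧ P' r (l, k) = 0 :=
  hlplf1bp_halve_variables_general f h C hp1 hfeas
end

section
/- Let λ ≥ 2 be an integer and let z : V → {0,1}, y : E → {0,1} satisfy y_{kl} ≤ z_k and y_{kl} ≤ z_l for every edge {k,l} ∈ E, and y(δ({k})) + y_{kk} ≥ λ z_k for every k ∈ V. If z_{k₀} = 1 for some k₀ ∈ V, then ∑_{k∈V} z_k ≥ λ; that is, any solution satisfying the λ-connectivity constraints with at least one activated hub has at least λ activated hub nodes. -/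
open Finset

/-- The cut-set `δ(S)`: the set of (non-loop) edges with one endpoint in `S` and the other
outside `S`. -/
def cutset {V : Type*} [Fintype V] [DecidableEq V] (S : Finset V) : Finset (Sym2 V) :=
  Finset.univ.filter (fun e : Sym2 V => ∃ k l : V, k ∈ S ∧ l ∉ S ∧ e = s(k, l))

/-- `y(δ(S))`: the number of activated hub edges in the cut-set of `S` (relative to the
indicator vector `y`). -/
def cutVal {V : Type*} [Fintype V] [DecidableEq V] (y : Sym2 V → ℝ) (S : Finset V) : ℝ :=
  ∑ e ∈ cutset S, y e

lemma injOn_sym2Mk_prod_of_disjoint {α : Type*} {S T : Set α} (hST : Disjoint S T) :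
    Set.InjOn (fun p : α × α => s(p.1, p.2)) (S ×ˢ T) := by
  rintro ⟨k, l⟩ ⟨hk, _⟩ ⟨k', l'⟩ ⟨_, hl'⟩ heq
  obtain ⟨rfl, rfl⟩ | ⟨rfl, rfl⟩ := Sym2.eq_iff.mp heq
  · rfl
  · exact (hST.notMem_of_mem_left hk hl').elim

section

variable {V : Type*} [Fintype V] [DecidableEq V]

lemma cutset_eq_image_product_compl (S : Finset V) :
    cutset S = (S ×ˢ Sᶜ).image fun p => s(p.1, p.2) := by
  ext e
  simp [cutset, and_assoc, eq_comm]

lemma cutVal_eq_sum_sum_compl (y : Sym2 V → ℝ) (S : Finset V) :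
    cutVal y S = ∑ k ∈ S, ∑ l ∈ Sᶜ, y s(k, l) := by
  have hinj : Set.InjOn (fun p : V × V => s(p.1, p.2)) ↑(S ×ˢ Sᶜ) := by
    rw [coe_product]
    exact injOn_sym2Mk_prod_of_disjoint (disjoint_coe.mpr disjoint_compl_right)
  rw [cutVal, cutset_eq_image_product_compl, sum_image hinj, sum_product]

lemma cutVal_singleton_add_loop (y : Sym2 V → ℝ) (k : V) :
    cutVal y {k} + y s(k, k) = ∑ l, y s(k, l) := by
  rw [cutVal_eq_sum_sum_compl, sum_singleton, Fintype.sum_eq_add_sum_compl k, add_comm]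

/-- Each edge at `k`, the loop included, is charged to its other endpoint. -/
theorem lambda_connectivity_forces_lambda_hubs_general
    (lam : ℝ) (z : V → ℝ) (y : Sym2 V → ℝ) (k : V)
    (hyz : ∀ l : V, y s(k, l) ≤ z l)
    (hsingle : lam * z k ≤ cutVal y {k} + y s(k, k)) :
    lam * z k ≤ ∑ l : V, z l :=
  calc
    lam * z k ≤ cutVal y {k} + y s(k, k) := hsingle
    _ = ∑ l, y s(k, l) := cutVal_singleton_add_loop y k
    _ ≤ ∑ l, z l := sum_le_sum fun l _ => hyz l

end

/-- Any solution satisfying the λ-connectivity (singleton cut-set) constraints that has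
at least one activated hub must have at least `λ` activated hub nodes. -/
theorem lambda_connectivity_forces_lambda_hubs
    {V : Type*} [Fintype V] [DecidableEq V]
    (lam : ℤ) (hlam : 2 ≤ lam)
    (z : V → ℝ) (y : Sym2 V → ℝ)
    (hz : ∀ k : V, z k = 0 ∨ z k = 1)
    (hy : ∀ e : Sym2 V, y e = 0 ∨ y e = 1)
    (hyz : ∀ k l : V, y s(k, l) ≤ z k ∧ y s(k, l) ≤ z l)
    (hsingle : ∀ k : V, (lam : ℝ) * z k ≤ cutVal y {k} + y s(k, k))
    (k₀ : V) (hk₀ : z k₀ = 1) :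
    (lam : ℝ) ≤ ∑ k : V, z k := by
  simpa only [hk₀, mul_one] using
    lambda_connectivity_forces_lambda_hubs_general lam z y k₀ (fun l => (hyz k₀ l).2) (hsingle k₀)
end

section
/- Let ρ ∈ [0,1], let C : A → ℝ, and let x, x̄ : A → {0,1} satisfy ∑_{a∈A} x_a = 1, x_{kl} + x_{lk} + x̄_{kl} + x̄_{lk} ≤ 1 for every pair k ≠ l, and x_{kk} + x̄_{kk} ≤ 1 for every k ∈ V. Then ∑_{(k,l)∈A} C_{kl} [(1 − ρ) x_{kl} + x̄_{kl} ∑_{(k',l') ∈ A \ {(k,l),(l,k)}} ρ x_{k'l'}] = ∑_{(k,l)∈A} C_{kl} ((1 − ρ) x_{kl} + ρ x̄_{kl}). That is, when all edges have the same failure probability ρ, the expected routing cost of a commodity simplifies to ∑_{(k,l)∈A} C_{kl}((1 − ρ) x_{kl} + ρ x̄_{kl}). -/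
open Finset

/-!
Since the backup indicator is binary, an arc used by the backup path leaves no capacity for the
original path on the same edge. Hence, for a backup arc, the exclusion set carries the whole unit of
original flow; for every other arc the backup term vanishes.
-/

theorem mul_sum_sdiff_of_forall_mul_eq_zero {ι R : Type*} [DecidableEq ι]
    [NonUnitalNonAssocSemiring R] {s t : Finset ι} {f : ι → R} {b : R}
    (h : ∀ i ∈ s, b * f i = 0) :
    b * ∑ i ∈ t \ s, f i = b * ∑ i ∈ t, f i := by
  rw [mul_sum, mul_sum]
  refine sum_subset sdiff_subset fun i hit hi => h i ?_
  by_contra his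
  exact hi (mem_sdiff.mpr ⟨hit, his⟩)

theorem mul_eq_zero_of_eq_zero_or_one_of_add_le_one {R : Type*} [NonAssocSemiring R]
    [PartialOrder R] [IsOrderedCancelAddMonoid R] {u v : R}
    (hu : 0 ≤ u) (hv : v = 0 ∨ v = 1) (h : u + v ≤ 1) : v * u = 0 := by
  rcases hv with rfl | rfl
  · exact zero_mul u
  · have hu' : u ≤ 0 := add_le_iff_nonpos_left.mp h
    rw [le_antisymm hu' hu, mul_zero]

theorem original_add_backup_le_one {V M : Type*} [DecidableEq V] [AddCommMonoid M] [One M]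
    [PartialOrder M] [IsOrderedAddMonoid M] {x xb : V × V → M}
    (hx : ∀ a, 0 ≤ x a) (hxb : ∀ a, 0 ≤ xb a)
    (hedge : ∀ k l : V, k ≠ l → x (k, l) + x (l, k) + xb (k, l) + xb (l, k) ≤ 1)
    (hloop : ∀ k : V, x (k, k) + xb (k, k) ≤ 1) (a : V × V) :
    ∀ a' ∈ ({a, (a.2, a.1)} : Finset (V × V)), x a' + xb a ≤ 1 := by
  obtain ⟨k, l⟩ := a
  simp only [mem_insert, mem_singleton, forall_eq_or_imp, forall_eq]
  rcases eq_or_ne k l with rfl | hkl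
  · exact ⟨hloop k, hloop k⟩
  · have hsum : x (k, l) + x (l, k) + xb (k, l) ≤ 1 :=
      (le_add_of_nonneg_right (hxb (l, k))).trans (hedge k l hkl)
    exact ⟨(add_le_add_left (le_add_of_nonneg_right (hx (l, k))) _).trans hsum,
      (add_le_add_left (le_add_of_nonneg_left (hx (k, l))) _).trans hsum⟩

theorem same_probability_simplification_general
    {V R : Type*} [Fintype V] [DecidableEq V] [CommRing R] [PartialOrder R] [IsOrderedRing R]
    (ρ : R) (C x xb : V × V → R)
    (hx : ∀ a, 0 ≤ x a) (hxb : ∀ a, xb a = 0 ∨ xb a = 1) (hsum : ∑ a, x a = 1)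
    (hedge : ∀ k l : V, k ≠ l → x (k, l) + x (l, k) + xb (k, l) + xb (l, k) ≤ 1)
    (hloop : ∀ k : V, x (k, k) + xb (k, k) ≤ 1) :
    ∑ a, C a * ((1 - ρ) * x a + xb a * ∑ a' ∈ univ \ {a, (a.2, a.1)}, ρ * x a')
      = ∑ a, C a * ((1 - ρ) * x a + ρ * xb a) := by
  have hxb_nonneg (a : V × V) : 0 ≤ xb a :=
    (hxb a).elim Eq.ge fun h => h ▸ zero_le_one
  have hdisjoint (a : V × V) : ∀ a' ∈ ({a, (a.2, a.1)} : Finset (V × V)), xb a * x a' = 0 :=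
    fun a' ha' => mul_eq_zero_of_eq_zero_or_one_of_add_le_one (hx a') (hxb a)
      (original_add_backup_le_one hx hxb_nonneg hedge hloop a a' ha')
  refine sum_congr rfl fun a _ => ?_
  rw [← mul_sum, mul_left_comm, mul_sum_sdiff_of_forall_mul_eq_zero (hdisjoint a), hsum, mul_one]

/-- When all edges have the same failure probability `ρ`, the expected routing cost of a
commodity in (HLPLF-1BP) simplifies to `∑_{(k,l)∈A} C_{kl} ((1 − ρ) x_{kl} + ρ x̄_{kl})`. -/
theorem same_probability_simplification
    {V : Type*} [Fintype V] [DecidableEq V]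
    (ρ : ℝ) (hρ0 : 0 ≤ ρ) (hρ1 : ρ ≤ 1)
    (C : V × V → ℝ) (x xb : V × V → ℝ)
    (hx : ∀ a : V × V, x a = 0 ∨ x a = 1)
    (hxb : ∀ a : V × V, xb a = 0 ∨ xb a = 1)
    (hsum : ∑ a : V × V, x a = 1)
    (hedge : ∀ k l : V, k ≠ l → x (k, l) + x (l, k) + xb (k, l) + xb (l, k) ≤ 1)
    (hloop : ∀ k : V, x (k, k) + xb (k, k) ≤ 1) :
    ∑ a : V × V,
        C a * ((1 - ρ) * x a +
          xb a * ∑ a' ∈ Finset.univ \ ({a, (a.2, a.1)} : Finset (V × V)), ρ * x a')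
      = ∑ a : V × V, C a * ((1 - ρ) * x a + ρ * xb a) :=
  same_probability_simplification_general ρ C x xb
    (fun a => (hx a).elim Eq.ge fun h => h ▸ zero_le_one) hxb hsum hedge hloop
end
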